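/- Let 𝒯 be a rooted tree with vertex set V, and let q ∈ [0,1]. Then Σ_{A ⊆ V, A contains all vertices of some path in 𝒯 from the root to a leaf of 𝒯} q^{|A|} (1-q)^{|V| - |A|} = p[𝒯](q). Equivalently, if each vertex of 𝒯 is kept independently with probability q and deleted otherwise, the probability that some root-to-leaf path of 𝒯 has all of its vertices kept equals p[𝒯](q). -/

import Mathlib

/-- A rooted tree: a finite tree with a distinguished root vertex, given by the (ordered)
list of subtrees rooted at the children of the root. -/
inductive RTree : Type where
  | node : List RTree → RTree

namespace RTree

mutual
/-- The tree polynomial `p[𝒯] ∈ ℤ[x]`: `p = x` for a single vertex, and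
`p[𝒯] = x (1 − ∏ᵢ (1 − p[𝒯ᵢ]))` when the subtrees rooted at the children of the root are
`𝒯₁, …, 𝒯ᵣ`. -/
noncomputable def treePoly : RTree → Polynomial ℤ
  | .node [] => Polynomial.X
  | .node (t :: ts) => Polynomial.X * (1 - prodPoly (t :: ts))
  termination_by t => sizeOf t

/-- `∏ᵢ (1 − p[𝒯ᵢ])` over a list of trees. -/
noncomputable def prodPoly : List RTree → Polynomial ℤ
  | [] => 1
  | t :: ts => (1 - treePoly t) * prodPoly ts
  termination_by l => sizeOf l
end

mutual
/-- The set of vertex addresses of a rooted tree: a vertex is addressed by the list of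
child indices on the path from the root to it (so the root has address `[]`). -/
def vertexFinset : RTree → Finset (List ℕ)
  | .node ts => insert [] (childVerts ts 0)
  termination_by t => sizeOf t

def childVerts : List RTree → ℕ → Finset (List ℕ)
  | [], _ => ∅
  | t :: ts, i => (vertexFinset t).image (List.cons i) ∪ childVerts ts (i + 1)
  termination_by l _ => sizeOf l
end

mutual
/-- The subtree rooted at a given vertex address, if the address is valid. -/
def subtreeAt : RTree → List ℕ → Option RTree
  | t, [] => some t
  | .node ts, i :: l => subtreeAtAux ts i l
  termination_by t _ => sizeOf t

def subtreeAtAux : List RTree → ℕ → List ℕ → Option RTree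
  | [], _, _ => none
  | t :: _, 0, l => subtreeAt t l
  | _ :: ts, i + 1, l => subtreeAtAux ts i l
  termination_by l _ _ => sizeOf l
end

/-- Whether a tree consists of a single vertex (i.e. its root is a leaf). -/
def isLeafTree : RTree → Bool
  | .node [] => true
  | .node (_ :: _) => false

/-- The set of (addresses of) leaves of a rooted tree: vertices with no children. -/
def leafFinset (t : RTree) : Finset (List ℕ) :=
  (vertexFinset t).filter (fun l => (subtreeAt t l).any isLeafTree = true)

/-- The set of all prefixes of an address: the set of vertices of the path from the root
to the vertex with this address. -/
def prefixFinset (l : List ℕ) : Finset (List ℕ) :=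
  (Finset.range (l.length + 1)).image (fun k => l.take k)

end RTree

namespace RTree

theorem subtreeAtAux_eq (ts : List RTree) (i : ℕ) (l : List ℕ) :
    subtreeAtAux ts i l = (ts[i]?).bind (fun t => subtreeAt t l) := by
  induction ts generalizing i with
  | nil => simp [subtreeAtAux]
  | cons t ts ih =>
    cases i with
    | zero => simp [subtreeAtAux]
    | succ i => simp [subtreeAtAux, ih]

theorem mem_childVerts (ts : List RTree) (i : ℕ) (l : List ℕ) :
    l ∈ childVerts ts i ↔
      ∃ j t l', ts[j]? = some t ∧ l' ∈ vertexFinset t ∧ l = (i + j) :: l' := by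
  induction ts generalizing i with
  | nil => simp [childVerts]
  | cons t ts ih =>
    simp only [childVerts, Finset.mem_union, Finset.mem_image, ih]
    constructor
    · rintro (⟨l', h, rfl⟩ | ⟨j, t', l', h1, h2, rfl⟩)
      · exact ⟨0, t, l', by simp, h, by simp⟩
      · exact ⟨j + 1, t', l', by simpa using h1, h2, by congr 1; omega⟩
    · rintro ⟨j, t', l', h1, h2, rfl⟩
      cases j with
      | zero =>
        simp only [List.getElem?_cons_zero, Option.some.injEq] at h1
        subst h1
        exact Or.inl ⟨l', h2, by simp⟩
      | succ j =>
        exact Or.inr ⟨j, t', l', by simpa using h1, h2, by congr 1; omega⟩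

theorem nil_mem_leaf (ts : List RTree) : [] ∈ leafFinset (node ts) ↔ ts = [] := by
  cases ts <;> simp [leafFinset, vertexFinset, subtreeAt, isLeafTree]

theorem cons_mem_leaf (ts : List RTree) (j : ℕ) (l : List ℕ) :
    j :: l ∈ leafFinset (node ts) ↔ ∃ t, ts[j]? = some t ∧ l ∈ leafFinset t := by
  simp only [leafFinset, vertexFinset, subtreeAt, Finset.mem_filter, Finset.mem_insert,
    mem_childVerts, subtreeAtAux_eq]
  constructor
  · rintro ⟨h | ⟨j', t, l', h1, h2, h3⟩, h4⟩
    · simp at h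
    · simp only [zero_add, List.cons.injEq] at h3
      obtain ⟨rfl, rfl⟩ := h3
      refine ⟨t, h1, h2, ?_⟩
      simpa [h1] using h4
  · rintro ⟨t, h1, h2, h3⟩
    exact ⟨Or.inr ⟨j, t, l, h1, h2, by simp⟩, by simpa [h1] using h3⟩

/-- Some root-to-leaf path lies in `S`. -/
def Good (t : RTree) (S : Set (List ℕ)) : Prop :=
  ∃ l ∈ leafFinset t, ∀ k, l.take k ∈ S

/-- Some tree in the list (shifted by `i`) is good. -/
def GoodL (ts : List RTree) (i : ℕ) (S : Set (List ℕ)) : Prop :=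
  ∃ j t, ts[j]? = some t ∧ Good t {l | (i + j) :: l ∈ S}

theorem good_iff (t : RTree) (A : Finset (List ℕ)) :
    (∃ l ∈ leafFinset t, prefixFinset l ⊆ A) ↔ Good t (A : Set (List ℕ)) := by
  unfold Good
  refine exists_congr fun l => and_congr_right fun _ => ?_
  simp only [prefixFinset, Finset.image_subset_iff, Finset.mem_range, Finset.mem_coe]
  constructor
  · intro h k
    rcases lt_or_ge k (l.length + 1) with hk | hk
    · exact h k hk
    · have := h l.length (by omega)
      rw [List.take_of_length_le (by omega)] at this ⊢
      exact this
  · intro h k _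
    exact h k

theorem good_nil (S : Set (List ℕ)) : Good (node []) S ↔ [] ∈ S := by
  constructor
  · rintro ⟨l, _, h⟩
    simpa using h 0
  · intro h
    exact ⟨[], (nil_mem_leaf _).2 rfl, fun k => by simpa using h⟩

theorem good_cons (t : RTree) (ts : List RTree) (S : Set (List ℕ)) :
    Good (node (t :: ts)) S ↔ [] ∈ S ∧ GoodL (t :: ts) 0 S := by
  constructor
  · rintro ⟨l, hl, h⟩
    refine ⟨by simpa using h 0, ?_⟩
    cases l with
    | nil => simp [nil_mem_leaf] at hl
    | cons j l =>
      obtain ⟨t', h1, h2⟩ := (cons_mem_leaf _ _ _).1 hl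
      exact ⟨j, t', h1, l, h2, fun k => by simpa using h (k + 1)⟩
  · rintro ⟨h0, j, t', h1, l, h2, h3⟩
    refine ⟨j :: l, (cons_mem_leaf _ _ _).2 ⟨t', h1, h2⟩, fun k => ?_⟩
    cases k with
    | zero => simpa using h0
    | succ k => simpa using h3 k

theorem goodL_cons (t : RTree) (ts : List RTree) (i : ℕ) (S : Set (List ℕ)) :
    GoodL (t :: ts) i S ↔ Good t {l | i :: l ∈ S} ∨ GoodL ts (i + 1) S := by
  constructor
  · rintro ⟨j, t', h1, h2⟩
    cases j with
    | zero =>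
      simp only [List.getElem?_cons_zero, Option.some.injEq] at h1
      subst h1
      exact Or.inl (by simpa using h2)
    | succ j =>
      refine Or.inr ⟨j, t', by simpa using h1, ?_⟩
      rwa [show i + 1 + j = i + (j + 1) by omega]
  · rintro (h | ⟨j, t', h1, h2⟩)
    · exact ⟨0, t, by simp, by simpa using h⟩
    · refine ⟨j + 1, t', by simpa using h1, ?_⟩
      rwa [show i + (j + 1) = i + 1 + j by omega]

theorem goodL_congr (ts : List RTree) (i : ℕ) (S T : Set (List ℕ))
    (h : ∀ j l, i ≤ j → (j :: l ∈ S ↔ j :: l ∈ T)) : GoodL ts i S ↔ GoodL ts i T := by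
  unfold GoodL
  have : ∀ j, {l | (i + j) :: l ∈ S} = {l | (i + j) :: l ∈ T} := fun j => by
    ext l
    exact h _ _ (by omega)
  simp only [this]

open scoped Classical in
/-- Probability that the random subset of `V` satisfies `P`. -/
noncomputable def Pr (q : ℝ) (V : Finset (List ℕ)) (P : Set (List ℕ) → Prop) : ℝ :=
  ∑ A ∈ V.powerset, if P (A : Set (List ℕ)) then
    q ^ A.card * (1 - q) ^ (V.card - A.card) else 0

theorem Pr_not (q : ℝ) (V : Finset (List ℕ)) (P : Set (List ℕ) → Prop) :
    Pr q V (fun S => ¬ P S) = 1 - Pr q V P := by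
  classical
  have h := Finset.sum_pow_mul_eq_add_pow q (1 - q) V
  rw [add_sub_cancel, one_pow] at h
  rw [eq_sub_iff_add_eq, ← h, Pr, Pr, ← Finset.sum_add_distrib]
  refine Finset.sum_congr rfl fun A _ => ?_
  by_cases hP : P (A : Set (List ℕ)) <;> simp [hP]

theorem Pr_union (q : ℝ) (U V : Finset (List ℕ)) (hd : Disjoint U V)
    (P Q R : Set (List ℕ) → Prop)
    (h : ∀ A B : Finset (List ℕ), A ⊆ U → B ⊆ V →
      (R ((A : Set (List ℕ)) ∪ (B : Set (List ℕ))) ↔ P (A : Set (List ℕ)) ∧ Q (B : Set (List ℕ)))) :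
    Pr q (U ∪ V) R = Pr q U P * Pr q V Q := by
  classical
  unfold Pr
  rw [Finset.sum_mul_sum, ← Finset.sum_product']
  symm
  refine Finset.sum_nbij' (fun x => x.1 ∪ x.2) (fun A => (A ∩ U, A ∩ V)) ?_ ?_ ?_ ?_ ?_
  · rintro ⟨A, B⟩ hx
    simp only [Finset.mem_product, Finset.mem_powerset] at hx ⊢
    exact Finset.union_subset_union hx.1 hx.2
  · intro A _
    simp
  · rintro ⟨A, B⟩ hx
    simp only [Finset.mem_product, Finset.mem_powerset] at hx
    obtain ⟨hA, hB⟩ := hx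
    rw [Finset.disjoint_left] at hd
    ext x
    · have := @hA x; have := @hB x; have := @hd x
      simp only [Finset.mem_inter, Finset.mem_union]; tauto
    · have := @hA x; have := @hB x; have := @hd x
      simp only [Finset.mem_inter, Finset.mem_union]; tauto
  · intro A hA
    simp only [Finset.mem_powerset] at hA
    ext x
    have := @hA x
    simp only [Finset.mem_inter, Finset.mem_union] at *; tauto
  · rintro ⟨A, B⟩ hx
    simp only [Finset.mem_product, Finset.mem_powerset] at hx
    obtain ⟨hA, hB⟩ := hx
    have hAB : Disjoint A B := Finset.disjoint_of_subset_left hA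
      (Finset.disjoint_of_subset_right hB hd)
    have hcA := Finset.card_le_card hA
    have hcB := Finset.card_le_card hB
    simp only [Finset.coe_union, h A B hA hB, Finset.card_union_of_disjoint hAB,
      Finset.card_union_of_disjoint hd]
    rw [show U.card + V.card - (A.card + B.card) = (U.card - A.card) + (V.card - B.card) by omega,
      pow_add, pow_add]
    by_cases hP : P (A : Set (List ℕ)) <;> by_cases hQ : Q (B : Set (List ℕ)) <;> simp [hP, hQ]
    ring

theorem Pr_image (q : ℝ) (V : Finset (List ℕ)) (i : ℕ) (P : Set (List ℕ) → Prop) :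
    Pr q (V.image (List.cons i)) (fun S => P {l | i :: l ∈ S}) = Pr q V P := by
  classical
  have hi : Function.Injective (List.cons i) := List.cons_injective
  unfold Pr
  rw [Finset.powerset_image, Finset.sum_image (fun A _ B _ hAB => Finset.image_injective hi hAB)]
  refine Finset.sum_congr rfl fun A _ => ?_
  rw [Finset.card_image_of_injective _ hi, Finset.card_image_of_injective _ hi]
  simp

theorem Pr_root (q : ℝ) : Pr q {[]} (fun S => [] ∈ S) = q := by
  have : ({[]} : Finset (List ℕ)) = insert [] ∅ := rfl
  rw [Pr, this, Finset.sum_powerset_insert (by simp)]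
  simp

theorem nil_notMem_childVerts (ts : List RTree) (i : ℕ) : [] ∉ childVerts ts i := by
  simp [mem_childVerts]

mutual
theorem Pr_tree (q : ℝ) : ∀ t : RTree,
    Pr q (vertexFinset t) (Good t) = Polynomial.aeval q (treePoly t)
  | .node [] => by
    have h : Good (node []) = fun S => [] ∈ S := by
      funext S; exact propext (good_nil S)
    rw [h]
    simpa [vertexFinset, childVerts, treePoly] using Pr_root q
  | .node (t :: ts) => by
    have ih := Pr_list q (t :: ts) 0
    rw [Pr_not] at ih
    rw [vertexFinset, Finset.insert_eq, Pr_union q _ _ _ (fun S => [] ∈ S) (GoodL (t :: ts) 0),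
      Pr_root, treePoly]
    · simp only [map_mul, map_sub, map_one, Polynomial.aeval_X, ← ih]
      ring
    · intro A B hA hB
      have hB0 : [] ∉ B := fun h => nil_notMem_childVerts _ _ (hB h)
      rw [good_cons, goodL_congr (t :: ts) 0 _ (B : Set (List ℕ))]
      · simp [hB0]
      · intro j l _
        have : j :: l ∉ A := fun h => by simpa using hA h
        simp [this]
    · simpa using nil_notMem_childVerts _ _
  termination_by t => sizeOf t

theorem Pr_list (q : ℝ) : ∀ (ts : List RTree) (i : ℕ),
    Pr q (childVerts ts i) (fun S => ¬ GoodL ts i S) = Polynomial.aeval q (prodPoly ts)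
  | [], i => by
    simp [Pr, childVerts, GoodL, prodPoly]
  | t :: ts, i => by
    have ih1 := Pr_tree q t
    have ih2 := Pr_list q ts (i + 1)
    rw [childVerts, Pr_union q _ _ _ (fun S => ¬ Good t {l | i :: l ∈ S})
      (fun S => ¬ GoodL ts (i + 1) S), ih2, Pr_image q _ i (fun S => ¬ Good t S), Pr_not, ih1,
      prodPoly]
    · simp
    · intro A B hA hB
      rw [goodL_cons, not_or, goodL_congr ts (i + 1) _ (B : Set (List ℕ))]
      · have : {l | i :: l ∈ (A : Set (List ℕ)) ∪ (B : Set (List ℕ))} =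
            {l | i :: l ∈ (A : Set (List ℕ))} := by
          ext l
          have : i :: l ∉ B := fun h => by
            obtain ⟨j, t', l', _, _, h3⟩ := (mem_childVerts _ _ _).1 (hB h)
            simp only [List.cons.injEq] at h3
            omega
          simp [this]
        rw [this]
      · intro j l hj
        have : j :: l ∉ A := fun h => by
          have h' := hA h
          simp only [Finset.mem_image, List.cons.injEq] at h'
          obtain ⟨_, _, h3, _⟩ := h'
          omega
        simp [this]
    · rw [Finset.disjoint_left]
      intro x hx hx'
      obtain ⟨l, _, rfl⟩ := Finset.mem_image.1 hx
      obtain ⟨j, t', l', _, _, h3⟩ := (mem_childVerts _ _ _).1 hx'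
      simp only [List.cons.injEq] at h3
      omega
  termination_by ts => sizeOf ts
end

end RTree

open scoped Classical in
/-- For a rooted tree `𝒯` with vertex set `V` and `q ∈ [0,1]`,
`Σ_{A ⊆ V, A ⊇ some root-to-leaf path} q^{|A|} (1−q)^{|V|−|A|} = p[𝒯](q)`: if each vertex
is kept independently with probability `q`, the probability that some root-to-leaf path is
entirely kept equals `p[𝒯](q)`. -/
theorem stmt6 (t : RTree) (q : ℝ) (hq : q ∈ Set.Icc (0 : ℝ) 1) :
    (∑ A ∈ (RTree.vertexFinset t).powerset,
        if ∃ ℓ ∈ RTree.leafFinset t, RTree.prefixFinset ℓ ⊆ A then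
          q ^ A.card * (1 - q) ^ ((RTree.vertexFinset t).card - A.card)
        else 0)
      = Polynomial.aeval q (RTree.treePoly t) := by
  rw [← RTree.Pr_tree q t, RTree.Pr]
  refine Finset.sum_congr rfl fun A _ => ?_
  simp only [RTree.good_iff]
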